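/- For the 5-tuple (8, 9, 11, 14, 15): the largest integer not representable as a non-negative integer linear combination of (8, 9, 11, 14, 15) is 21, and the largest integer having exactly one such representation is 20; in particular g_0(8,9,11,14,15) = 21 > 20 = g_1(8,9,11,14,15). -/

import Mathlib

/-!
Each of the eight consecutive integers `22, …, 29` has two different representations by
`8, 9, 11, 14, 15`. Adding further copies of `8` to both representations gives two different
representations of every `t ≥ 22` (`exists_two_reps`), and hence `1 < numRep t`, because there are
only finitely many representations. It remains to see by inspection that `21` has no
representation and that `9 + 11` is the only representation of `20`.
-/

/-- Number of representations of `t` as a non-negative integer linear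
combination of the entries of the tuple `x`. -/
noncomputable def numRep (x : List ℕ) (t : ℕ) : ℕ :=
  Nat.card {c : Fin x.length → ℕ // ∑ i, c i * x.get i = t}

/-- `t` is representable as a non-negative integer linear combination of the
entries of the tuple `x`. -/
def Representable (x : List ℕ) (t : ℕ) : Prop :=
  ∃ c : Fin x.length → ℕ, ∑ i, c i * x.get i = t

/-- No entry of the tuple `x` is a non-negative integer linear combination of
the other entries. -/
def Reasonable (x : List ℕ) : Prop :=
  ∀ i : Fin x.length, ¬ ∃ c : Fin x.length → ℕ,
    c i = 0 ∧ ∑ j, c j * x.get j = x.get i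

/-- The 5-tuple `X_n = (2n-2, 2n-1, 2n, 3n-3, 3n)`. -/
def X (n : ℕ) : List ℕ := [2*n-2, 2*n-1, 2*n, 3*n-3, 3*n]

/-- The n-tuple `Y_n = (n+1, n+4, n+5, n+7, n+8, ..., 2n+1, 2n+3, 2n+4)`. -/
def Y (n : ℕ) : List ℕ :=
  [n+1, n+4, n+5] ++ List.range' (n+7) (n-5) ++ [2*n+3, 2*n+4]

/-- Finiteness matters because `Nat.card` of an infinite type is `0`. -/
lemma finite_reps (t : ℕ) :
    Finite {c : Fin [8, 9, 11, 14, 15].length → ℕ //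
      ∑ i, c i * [8, 9, 11, 14, 15].get i = t} := by
  refine Set.Finite.to_subtype (Set.Finite.subset (Set.finite_Iic (fun _ => t)) ?_)
  intro c hc i
  have h : ∑ i, c i * [8, 9, 11, 14, 15].get i = t := hc
  simp [Fin.sum_univ_succ] at h
  fin_cases i <;> simp <;> omega

lemma exists_two_reps (t : ℕ) (ht : 22 ≤ t) :
    ∃ c d : Fin [8, 9, 11, 14, 15].length → ℕ, c ≠ d ∧
      ∑ i, c i * [8, 9, 11, 14, 15].get i = t ∧ ∑ i, d i * [8, 9, 11, 14, 15].get i = t := by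
  -- The pairs of representations used below all differ in the coefficient of `9`, `14` or `15`.
  have key : ∀ a b c d e a' b' c' d' e' : ℕ, b ≠ b' ∨ d ≠ d' ∨ e ≠ e' →
      a * 8 + b * 9 + c * 11 + d * 14 + e * 15 = t →
      a' * 8 + b' * 9 + c' * 11 + d' * 14 + e' * 15 = t →
      ∃ c d : Fin [8, 9, 11, 14, 15].length → ℕ, c ≠ d ∧
        ∑ i, c i * [8, 9, 11, 14, 15].get i = t ∧
        ∑ i, d i * [8, 9, 11, 14, 15].get i = t := by
    intro a b c d e a' b' c' d' e' hne h h'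
    refine ⟨![a, b, c, d, e], ![a', b', c', d', e'], ?_, ?_, ?_⟩
    · intro heq
      have h1 : b = b' := congrFun heq 1
      have h3 : d = d' := congrFun heq 3
      have h4 : e = e' := congrFun heq 4
      omega
    · simp [Fin.sum_univ_succ]; omega
    · simp [Fin.sum_univ_succ]; omega
  obtain ⟨k, hk⟩ : ∃ k, t = 8 * k + 22 ∨ t = 8 * k + 23 ∨ t = 8 * k + 24 ∨ t = 8 * k + 25 ∨
      t = 8 * k + 26 ∨ t = 8 * k + 27 ∨ t = 8 * k + 28 ∨ t = 8 * k + 29 :=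
    ⟨(t - 22) / 8, by omega⟩
  rcases hk with h | h | h | h | h | h | h | h
  · exact key (k + 1) 0 0 1 0 k 0 2 0 0 (by omega) (by omega) (by omega)
  · exact key (k + 1) 0 0 0 1 k 1 0 1 0 (by omega) (by omega) (by omega)
  · exact key (k + 3) 0 0 0 0 k 1 0 0 1 (by omega) (by omega) (by omega)
  · exact key (k + 2) 1 0 0 0 k 0 1 1 0 (by omega) (by omega) (by omega)
  · exact key (k + 1) 2 0 0 0 k 0 1 0 1 (by omega) (by omega) (by omega)
  · exact key k 3 0 0 0 (k + 2) 0 1 0 0 (by omega) (by omega) (by omega)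
  · exact key (k + 1) 1 1 0 0 k 0 0 2 0 (by omega) (by omega) (by omega)
  · exact key k 2 1 0 0 k 0 0 1 1 (by omega) (by omega) (by omega)

lemma one_lt_numRep (t : ℕ) (ht : 22 ≤ t) : 1 < numRep [8, 9, 11, 14, 15] t := by
  obtain ⟨c, d, hne, hc, hd⟩ := exists_two_reps t ht
  have := finite_reps t
  have : Nontrivial {c : Fin [8, 9, 11, 14, 15].length → ℕ //
      ∑ i, c i * [8, 9, 11, 14, 15].get i = t} :=
    ⟨⟨c, hc⟩, ⟨d, hd⟩, fun h => hne (congrArg Subtype.val h)⟩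
  exact Finite.one_lt_card

lemma numRep_twentyone : numRep [8, 9, 11, 14, 15] 21 = 0 := by
  have : IsEmpty {c : Fin [8, 9, 11, 14, 15].length → ℕ //
      ∑ i, c i * [8, 9, 11, 14, 15].get i = 21} := by
    refine ⟨fun ⟨c, h⟩ => ?_⟩
    simp [Fin.sum_univ_succ] at h
    have h2 : c 2 ≤ 1 := by omega
    have h3 : c 3 ≤ 1 := by omega
    have h4 : c 4 ≤ 1 := by omega
    interval_cases c 2 <;> interval_cases c 3 <;> interval_cases c 4 <;> omega
  exact Nat.card_of_isEmpty

lemma numRep_twenty : numRep [8, 9, 11, 14, 15] 20 = 1 := by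
  refine Nat.card_eq_one_iff_exists.mpr ⟨⟨![0, 1, 1, 0, 0], by simp [Fin.sum_univ_succ]⟩, ?_⟩
  rintro ⟨c, h⟩
  simp [Fin.sum_univ_succ] at h
  obtain ⟨h0, h1, h2, h3, h4⟩ : c 0 = 0 ∧ c 1 = 1 ∧ c 2 = 1 ∧ c 3 = 0 ∧ c 4 = 0 := by
    have b2 : c 2 ≤ 1 := by omega
    have b3 : c 3 ≤ 1 := by omega
    have b4 : c 4 ≤ 1 := by omega
    interval_cases c 2 <;> interval_cases c 3 <;> interval_cases c 4 <;> omega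
  refine Subtype.ext (funext fun i => ?_)
  fin_cases i <;> simp [h0, h1, h2, h3, h4]

/-- For the 5-tuple `(8, 9, 11, 14, 15)`: the largest integer not representable
as a non-negative integer linear combination is `21`, and the largest integer
having exactly one such representation is `20`; in particular
`g₀(8,9,11,14,15) = 21 > 20 = g₁(8,9,11,14,15)`. -/
theorem stmt16 :
    IsGreatest {t : ℕ | numRep [8, 9, 11, 14, 15] t = 0} 21 ∧
      IsGreatest {t : ℕ | numRep [8, 9, 11, 14, 15] t = 1} 20 := by
  refine ⟨⟨numRep_twentyone, fun t ht => ?_⟩, ⟨numRep_twenty, fun t ht => ?_⟩⟩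
  · by_contra hlt
    have := one_lt_numRep t (by omega)
    simp only [Set.mem_ofPred_eq] at ht
    omega
  · simp only [Set.mem_ofPred_eq] at ht
    by_contra hlt
    -- Only `t = 21` is not covered by `one_lt_numRep`, and there `numRep` is `0`.
    rcases eq_or_ne t 21 with rfl | h21
    · have := numRep_twentyone
      omega
    · have := one_lt_numRep t (by omega)
      omega
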